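/- Let N ∈ ℕ and let Γ be a finite tree with vertex set V and edge set E, together with a finite set L of legs, each leg l ∈ L attached to a vertex v(l) ∈ V. Suppose given: for each vertex v a finite set I_v and a family of vectors u_v : I_v → ℝ^N; for each edge e, with endpoints ordered as (v_e, w_e), a finite set I_e containing I_{v_e} ∪ I_{w_e}, a linearly independent family u_e : I_e → ℝ^N restricting to u_{v_e} on I_{v_e} and to u_{w_e} on I_{w_e}, and integers a_e : I_e → ℤ determining the slope m_e = ∑_{i ∈ I_e} a_e(i)·u_e(i); and for each leg l a finite set I_l containing I_{v(l)}, a linearly independent family u_l : I_l → ℝ^N restricting to u_{v(l)}, and natural numbers a_l : I_l → ℕ determining m_l = ∑_{i ∈ I_l} a_l(i)·u_l(i). Assume: (small jumping) #(I_e ∖ I_{v_e}) ≤ 1 and #(I_e ∖ I_{w_e}) ≤ 1 for every edge e, and #(I_l ∖ I_{v(l)}) ≤ 1 for every leg l; (flag positivity) a_e(i) > 0 for every i ∈ I_e ∖ I_{v_e}, a_e(i) < 0 for every i ∈ I_e ∖ I_{w_e}, and a_l(i) > 0 for every i ∈ I_l ∖ I_{v(l)}; (slope negativity) if I_{v_e}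 ≠ I_e then a_e(j) ≤ 0 for all j ∈ I_{v_e}, and if I_{w_e} ≠ I_e then a_e(j) ≥ 0 for all j ∈ I_{w_e}. Then there exist edge lengths ℓ : E → ℝ with ℓ(e) > 0 for all e, and a map f : V → ℝ^N, such that: (i) for every vertex v, f(v) = ∑_{i ∈ I_v} μ_{v,i}·u_v(i) with all μ_{v,i} > 0; (ii) for every edge e, f(w_e) − f(v_e) = ℓ(e)·m_e; and (iii) for every leg l and every real t > 0, f(v(l)) + t·m_l = ∑_{i ∈ I_l} ν_i·u_l(i) with all ν_i > 0. -/

import Mathlib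

/-!
A vertex `v` is sent to the relative interior of its cone exactly when the coordinates of its image
are positive on `Iv v` and zero elsewhere. Along an edge from `A = Iv v` to `B = Iv w` inside
`C = IE e`, every such point for `A` can be moved in the direction of the slope to such a point for
`B`: if `B = C`, any sufficiently short length works, while if `C \ B = {k}`, the length is forced
by the vanishing of the `k`-th coordinate, and no other coordinate decreases. Reversing the edge
turns the hypotheses into themselves, so an edge can be traversed either way. Since a tree has no
cycles, choosing a point at a root and moving outwards meets no compatibility condition.
-/

section Forest

variable {V : Type*} {X : V → Type*} {G : SimpleGraph V}

/-- The transport of an element along a walk, given a map between the fibres of `X` for each ordered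
pair of vertices. It extends a value at a root to a section of `X` over a tree. -/
def walkTransport (g : ∀ v w, X v → X w) {v w : V} (p : G.Walk v w) (x : X v) : X w :=
  match p with
  | .nil => x
  | .cons' _ v' _ _ q => walkTransport g q (g _ v' x)

theorem walkTransport_concat (g : ∀ v w, X v → X w) {u v w : V} (p : G.Walk u v)
    (h : G.Adj v w) (x : X u) :
    walkTransport g (p.concat h) x = g v w (walkTransport g p x) := by
  induction p with
  | nil => rfl
  | cons _ _ ih => exact ih h _

theorem exists_section_of_isAcyclic [∀ v, Nonempty (X v)] (hG : G.IsAcyclic)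
    (g : ∀ v w, X v → X w) :
    ∃ F : ∀ v, X v, ∀ v w, G.Adj v w → F w = g v w (F v) ∨ F v = g w v (F w) := by
  rcases isEmpty_or_nonempty V with _ | ⟨⟨r⟩⟩
  · exact ⟨isEmptyElim, isEmptyElim⟩
  have : Nonempty V := ⟨r⟩
  obtain ⟨T, hGT, -, hT⟩ :=
    SimpleGraph.connected_top.exists_isTree_le_of_le_of_isAcyclic le_top hG
  choose q hq using hT.connected.exists_isPath r
  let x₀ : X r := Classical.arbitrary _
  refine ⟨fun v ↦ walkTransport g (q v) x₀, fun v w hvw ↦ ?_⟩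
  beta_reduce
  replace hvw : T.Adj v w := hGT hvw
  by_cases hv : v ∈ (q w).support
  · left
    rw [hT.isAcyclic.path_concat (hq v) (hq w) hvw hv, walkTransport_concat]
  · right
    have hw : w ∈ (q v).support :=
      hT.isAcyclic.mem_support_of_ne_mem_support_of_adj_of_isPath (hq v) (hq w) hvw hv
    rw [hT.isAcyclic.path_concat (hq w) (hq v) hvw.symm hw, walkTransport_concat]

theorem exists_section_of_isAcyclic_fromEdgeSet [∀ v, Nonempty (X v)] {E : Type*}
    {src tgt : E → V} (hne : ∀ e, src e ≠ tgt e)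
    (hinj : Function.Injective fun e ↦ s(src e, tgt e))
    (hacyclic : (SimpleGraph.fromEdgeSet (Set.range fun e ↦ s(src e, tgt e))).IsAcyclic)
    (R : ∀ e, X (src e) → X (tgt e) → Prop)
    (hforward : ∀ e x, ∃ y, R e x y) (hbackward : ∀ e y, ∃ x, R e x y) :
    ∃ F : ∀ v, X v, ∀ e, R e (F (src e)) (F (tgt e)) := by
  -- Quantifying over sections through `x` and `y` lets `R e` be applied without casting fibres.
  have hstep : ∀ v w (x : X v), ∃ y : X w, ∀ F : ∀ v, X v, F v = x → F w = y →
      ∀ e, s(src e, tgt e) = s(v, w) → R e (F (src e)) (F (tgt e)) := by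
    intro v w x
    by_cases hedge : ∃ e, s(src e, tgt e) = s(v, w)
    · obtain ⟨e, he⟩ := hedge
      have eq_e : ∀ e', s(src e', tgt e') = s(v, w) → e' = e := fun e' he' ↦
        hinj (he'.trans he.symm)
      rcases Sym2.eq_iff.mp he with ⟨rfl, rfl⟩ | ⟨rfl, rfl⟩
      · obtain ⟨y, hy⟩ := hforward e x
        exact ⟨y, by rintro F rfl rfl e' he'; exact eq_e e' he' ▸ hy⟩
      · obtain ⟨y, hy⟩ := hbackward e x
        exact ⟨y, by rintro F rfl rfl e' he'; exact eq_e e' he' ▸ hy⟩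
    · exact ⟨Classical.arbitrary _, fun _ _ _ e he ↦ absurd ⟨e, he⟩ hedge⟩
  choose g hg using hstep
  obtain ⟨F, hF⟩ := exists_section_of_isAcyclic hacyclic g
  refine ⟨F, fun e ↦ ?_⟩
  have hadj : (SimpleGraph.fromEdgeSet (Set.range fun e ↦ s(src e, tgt e))).Adj (src e) (tgt e) :=
    (SimpleGraph.fromEdgeSet_adj _).mpr ⟨Set.mem_range_self e, hne e⟩
  rcases hF _ _ hadj with h | h
  · exact hg _ _ _ F rfl h e rfl
  · exact hg _ _ _ F rfl h e Sym2.eq_swap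

end Forest

section OpenFace

variable {K ι : Type*} [Semiring K] [PartialOrder K]

variable (K) in
/-- The relatively open face, spanned by the coordinates in `s`, of the nonnegative orthant. Its
elements are the coordinates, extended by zero, of the points in the relative interior of the cone
with generators indexed by `s`. -/
def openFace (s : Finset ι) : Set (ι → K) :=
  {x | (∀ i ∈ s, 0 < x i) ∧ ∀ i ∉ s, x i = 0}

theorem openFace_nonempty [IsStrictOrderedRing K] (s : Finset ι) : (openFace K s).Nonempty := by
  classical
  exact ⟨fun i ↦ if i ∈ s then 1 else 0, by simp +contextual [openFace]⟩

theorem add_mul_pos_of_mem_openFace [IsStrictOrderedRing K] {s : Finset ι} {x : ι → K}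
    (hx : x ∈ openFace K s) {i : ι} {a t : K} (hnonneg : i ∈ s → 0 ≤ a) (hpos : i ∉ s → 0 < a)
    (ht : 0 < t) :
    0 < x i + t * a := by
  by_cases hi : i ∈ s
  · exact add_pos_of_pos_of_nonneg (hx.1 i hi) (mul_nonneg ht.le (hnonneg hi))
  · rw [hx.2 i hi, zero_add]
    exact mul_pos ht (hpos hi)

variable {M : Type*} [AddCommMonoid M] [Module K M]

theorem sum_smul_eq_of_mem_openFace {s t : Finset ι} {x : ι → K}
    (hx : x ∈ openFace K s) (hst : s ⊆ t) (u : ι → M) :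
    ∑ i ∈ s, x i • u i = ∑ i ∈ t, x i • u i :=
  Finset.sum_subset hst fun i _ hi ↦ by rw [hx.2 i hi, zero_smul]

theorem sum_smul_add_smul_sum_of_mem_openFace {s t : Finset ι} {x : ι → K}
    (hx : x ∈ openFace K s) (hst : s ⊆ t) (u : ι → M) (c : K) (a : ι → K) :
    ∑ i ∈ s, x i • u i + c • ∑ i ∈ t, a i • u i = ∑ i ∈ t, (x i + c * a i) • u i := by
  simp only [sum_smul_eq_of_mem_openFace hx hst, Finset.smul_sum, ← Finset.sum_add_distrib,
    add_smul, mul_smul]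

end OpenFace

section Slope

variable {K ι : Type*} [Field K] [LinearOrder K]

theorem exists_pos_forall_add_mul_pos [IsStrictOrderedRing K] (s : Finset ι) {x a : ι → K}
    (h : ∀ i ∈ s, 0 < x i ∨ 0 ≤ x i ∧ 0 < a i) :
    ∃ t > 0, ∀ i ∈ s, 0 < x i + t * a i := by
  have hbound : ∀ i : s, ∃ δ : Set.Ioi (0 : K), ∀ t : K, 0 < t → t ≤ δ → 0 < x i + t * a i := by
    rintro ⟨i, hi⟩
    rcases h i hi with hxi | ⟨hxi, hai⟩
    · refine ⟨⟨x i / (|a i| + 1), Set.mem_Ioi.mpr (by positivity)⟩, fun t ht hδ ↦ ?_⟩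
      have hle : t * (|a i| + 1) ≤ x i := (le_div_iff₀ (by positivity)).mp hδ
      have habs : t * -|a i| ≤ t * a i := mul_le_mul_of_nonneg_left (neg_abs_le _) ht.le
      linarith
    · exact ⟨⟨1, one_pos⟩, fun t ht _ ↦ add_pos_of_nonneg_of_pos hxi (mul_pos ht hai)⟩
  choose δ hδ using hbound
  obtain ⟨t, ht⟩ := Finite.exists_ge δ
  exact ⟨t, t.2, fun i hi ↦ hδ ⟨i, hi⟩ t t.2 (ht ⟨i, hi⟩)⟩

variable [DecidableEq ι]

/-- The combinatorial conditions on the slope `a` of an oriented edge in the cone with generators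
indexed by `C`, from the relative interior of the face `A` to that of the face `B`: small jumping,
flag positivity and slope negativity. -/
structure IsEdgeSlope (A B C : Finset ι) (a : ι → K) : Prop where
  source_subset : A ⊆ C
  target_subset : B ⊆ C
  card_sdiff_source_le : (C \ A).card ≤ 1
  card_sdiff_target_le : (C \ B).card ≤ 1
  pos_of_mem_sdiff_source : ∀ i ∈ C \ A, 0 < a i
  neg_of_mem_sdiff_target : ∀ i ∈ C \ B, a i < 0
  nonpos_of_source_ne : A ≠ C → ∀ i ∈ A, a i ≤ 0
  nonneg_of_target_ne : B ≠ C → ∀ i ∈ B, 0 ≤ a i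

namespace IsEdgeSlope

variable {A B C : Finset ι} {a x y : ι → K}

theorem sdiff_target_subset_source (h : IsEdgeSlope A B C a) : C \ B ⊆ A := by
  intro i hi
  by_contra hiA
  have hpos := h.pos_of_mem_sdiff_source i (by grind)
  exact hpos.not_gt (h.neg_of_mem_sdiff_target i hi)

variable [IsStrictOrderedRing K]

theorem symm (h : IsEdgeSlope A B C a) : IsEdgeSlope B A C (-a) where
  source_subset := h.target_subset
  target_subset := h.source_subset
  card_sdiff_source_le := h.card_sdiff_target_le
  card_sdiff_target_le := h.card_sdiff_source_le
  pos_of_mem_sdiff_source i hi := neg_pos.mpr (h.neg_of_mem_sdiff_target i hi)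
  neg_of_mem_sdiff_target i hi := neg_neg_iff_pos.mpr (h.pos_of_mem_sdiff_source i hi)
  nonpos_of_source_ne hB i hi := neg_nonpos.mpr (h.nonneg_of_target_ne hB i hi)
  nonneg_of_target_ne hA i hi := neg_nonneg.mpr (h.nonpos_of_source_ne hA i hi)

theorem exists_length_of_target_eq (h : IsEdgeSlope A C C a) (hx : x ∈ openFace K A) :
    ∃ t > 0, ∀ i ∈ C, 0 < x i + t * a i :=
  exists_pos_forall_add_mul_pos C fun i hi ↦ by
    by_cases hiA : i ∈ A
    · exact .inl (hx.1 i hiA)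
    · exact .inr ⟨(hx.2 i hiA).ge, h.pos_of_mem_sdiff_source i (by simp [hi, hiA])⟩

theorem exists_length_of_target_ne (h : IsEdgeSlope A B C a) (hBC : B ≠ C)
    (hx : x ∈ openFace K A) :
    ∃ t > 0, (∀ i ∈ B, 0 < x i + t * a i) ∧ ∀ i ∈ C \ B, x i + t * a i = 0 := by
  obtain ⟨k, hk⟩ : (C \ B).Nonempty :=
    Finset.sdiff_nonempty.mpr fun hCB ↦ hBC (h.target_subset.antisymm hCB)
  have hak : a k < 0 := h.neg_of_mem_sdiff_target k hk
  have ht : 0 < x k / -a k :=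
    div_pos (hx.1 k (h.sdiff_target_subset_source hk)) (neg_pos.mpr hak)
  refine ⟨x k / -a k, ht, fun i hi ↦ ?_, fun i hi ↦ ?_⟩
  · exact add_mul_pos_of_mem_openFace hx (fun _ ↦ h.nonneg_of_target_ne hBC i hi)
      (fun hiA ↦ h.pos_of_mem_sdiff_source i (by simp [h.target_subset hi, hiA])) ht
  · obtain rfl : i = k := Finset.card_le_one.mp h.card_sdiff_target_le i hi k hk
    rw [div_neg, neg_mul, div_mul_cancel₀ _ hak.ne, add_neg_cancel]

theorem exists_mem_openFace_target (h : IsEdgeSlope A B C a) (hx : x ∈ openFace K A) :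
    ∃ y ∈ openFace K B, ∃ t > 0, ∀ i ∈ C, y i = x i + t * a i := by
  obtain ⟨t, ht, hpos, hzero⟩ :
      ∃ t > 0, (∀ i ∈ B, 0 < x i + t * a i) ∧ ∀ i ∈ C \ B, x i + t * a i = 0 := by
    rcases eq_or_ne B C with rfl | hBC
    · simpa using h.exists_length_of_target_eq hx
    · exact h.exists_length_of_target_ne hBC hx
  refine ⟨fun i ↦ if i ∈ C then x i + t * a i else 0, ⟨fun i hi ↦ ?_, fun i hi ↦ ?_⟩, t, ht,
    fun i hi ↦ if_pos hi⟩
  · simpa only [if_pos (h.target_subset hi)] using hpos i hi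
  · exact ite_eq_right_iff.mpr fun hiC ↦ hzero i (Finset.mem_sdiff.mpr ⟨hiC, hi⟩)

theorem exists_mem_openFace_source (h : IsEdgeSlope A B C a) (hy : y ∈ openFace K B) :
    ∃ x ∈ openFace K A, ∃ t > 0, ∀ i ∈ C, y i = x i + t * a i := by
  obtain ⟨x, hx, t, ht, hxy⟩ := h.symm.exists_mem_openFace_target hy
  exact ⟨x, hx, t, ht, fun i hi ↦ by simp [hxy i hi]⟩

end IsEdgeSlope

end Slope

theorem stmt6_general {K M V E L ι : Type*} [Field K] [LinearOrder K] [IsStrictOrderedRing K]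
    [AddCommGroup M] [Module K M] [DecidableEq ι]
    (vend wend : E → V) (vleg : L → V)
    (hne : ∀ e, vend e ≠ wend e)
    (hedgeinj : Function.Injective (fun e ↦ s(vend e, wend e)))
    (hacyclic : (SimpleGraph.fromEdgeSet (Set.range fun e ↦ s(vend e, wend e))).IsAcyclic)
    (u : ι → M) (Iv : V → Finset ι) (IE : E → Finset ι) (IL : L → Finset ι)
    (aE : E → ι → K) (aL : L → ι → K)
    (hE : ∀ e, IsEdgeSlope (Iv (vend e)) (Iv (wend e)) (IE e) (aE e))
    (hIL : ∀ l, Iv (vleg l) ⊆ IL l)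
    (hnonnegL : ∀ l, ∀ i ∈ Iv (vleg l), 0 ≤ aL l i)
    (hposL : ∀ l, ∀ i ∈ IL l \ Iv (vleg l), 0 < aL l i) :
    ∃ (ℓ : E → K) (f : V → M),
      (∀ e, 0 < ℓ e) ∧
      (∀ v, ∃ μ : ι → K, (∀ i ∈ Iv v, 0 < μ i) ∧ f v = ∑ i ∈ Iv v, μ i • u i) ∧
      (∀ e, f (wend e) - f (vend e) = ℓ e • ∑ i ∈ IE e, aE e i • u i) ∧
      (∀ l, ∀ t : K, 0 < t →
        ∃ ν : ι → K, (∀ i ∈ IL l, 0 < ν i) ∧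
          f (vleg l) + t • ∑ i ∈ IL l, aL l i • u i = ∑ i ∈ IL l, ν i • u i) := by
  have (v : V) : Nonempty (openFace K (Iv v)) := (openFace_nonempty (Iv v)).to_subtype
  obtain ⟨F, hF⟩ := exists_section_of_isAcyclic_fromEdgeSet (X := fun v ↦ openFace K (Iv v))
    hne hedgeinj hacyclic (fun e x y ↦ ∃ t > 0, ∀ i ∈ IE e, y.1 i = x.1 i + t * aE e i)
    (fun e x ↦ by simpa using (hE e).exists_mem_openFace_target x.2)
    (fun e y ↦ by simpa using (hE e).exists_mem_openFace_source y.2)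
  choose ℓ hℓ hFℓ using hF
  refine ⟨ℓ, fun v ↦ ∑ i ∈ Iv v, (F v).1 i • u i, hℓ, fun v ↦ ⟨F v, (F v).2.1, rfl⟩,
    fun e ↦ ?_, fun l t ht ↦ ⟨fun i ↦ (F (vleg l)).1 i + t * aL l i, fun i hi ↦ ?_, ?_⟩⟩
  · rw [sub_eq_iff_eq_add', sum_smul_add_smul_sum_of_mem_openFace (F _).2 (hE e).source_subset,
      ← Finset.sum_congr rfl fun i hi ↦ congrArg (· • u i) (hFℓ e i hi)]
    exact sum_smul_eq_of_mem_openFace (F _).2 (hE e).target_subset u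
  · exact add_mul_pos_of_mem_openFace (F _).2 (hnonnegL l i)
      (fun hiv ↦ hposL l i (Finset.mem_sdiff.mpr ⟨hi, hiv⟩)) ht
  · exact sum_smul_add_smul_sum_of_mem_openFace (F _).2 (hIL l) u t (aL l)

/-- Tropical smoothing of combinatorial types over slope-sensitive targets.

A finite tree on vertex set `V` is encoded by a finite edge set `E` with
ordered endpoint maps `vend, wend : E → V` (no loops, no multiple edges, and
the resulting simple graph is a tree), together with a finite set `L` of legs
attached via `vleg : L → V`.  Cones of the (smooth, simplicial) target cone
complex are encoded by finite subsets of a global index set `ι` of rays with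
generators `u : ι → ℝ^N`: each vertex `v` carries the cone on `Iv v`, each
edge `e` the cone on `IE e ⊇ Iv (vend e) ∪ Iv (wend e)` with `u` linearly
independent on `IE e`, and each leg `l` the cone on `IL l ⊇ Iv (vleg l)` with
`u` linearly independent on `IL l`.  Slopes are `m_e = ∑_{i ∈ IE e} aE e i • u i`
and `m_l = ∑_{i ∈ IL l} aL l i • u i`.  Under the small-jumping, flag-positivity
and slope-negativity hypotheses there exist strictly positive edge lengths `ℓ`
and a map `f : V → ℝ^N` such that each vertex maps to the relative interior of
its cone, each edge is traversed affinely with its prescribed slope, and each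
leg stays in the relative interior of its cone. -/
theorem stmt6 (N : ℕ) {V E L ι : Type*}
    [Fintype V] [DecidableEq V] [Fintype E] [Fintype L]
    [Fintype ι] [DecidableEq ι]
    (vend wend : E → V) (vleg : L → V)
    (hne : ∀ e, vend e ≠ wend e)
    (hedgeinj : Function.Injective (fun e => s(vend e, wend e)))
    (htree : (SimpleGraph.fromEdgeSet (Set.range fun e => s(vend e, wend e))).IsTree)
    (u : ι → (Fin N → ℝ))
    (Iv : V → Finset ι) (IE : E → Finset ι) (IL : L → Finset ι)
    (hIE₁ : ∀ e, Iv (vend e) ⊆ IE e) (hIE₂ : ∀ e, Iv (wend e) ⊆ IE e)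
    (hIL : ∀ l, Iv (vleg l) ⊆ IL l)
    (hindE : ∀ e, LinearIndependent ℝ (fun i : (IE e : Set ι) => u i))
    (hindL : ∀ l, LinearIndependent ℝ (fun i : (IL l : Set ι) => u i))
    (aE : E → ι → ℤ) (aL : L → ι → ℕ)
    (hjumpE₁ : ∀ e, (IE e \ Iv (vend e)).card ≤ 1)
    (hjumpE₂ : ∀ e, (IE e \ Iv (wend e)).card ≤ 1)
    (hjumpL : ∀ l, (IL l \ Iv (vleg l)).card ≤ 1)
    (hposE : ∀ e, ∀ i ∈ IE e \ Iv (vend e), 0 < aE e i)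
    (hnegE : ∀ e, ∀ i ∈ IE e \ Iv (wend e), aE e i < 0)
    (hposL : ∀ l, ∀ i ∈ IL l \ Iv (vleg l), 0 < aL l i)
    (hslope₁ : ∀ e, Iv (vend e) ≠ IE e → ∀ j ∈ Iv (vend e), aE e j ≤ 0)
    (hslope₂ : ∀ e, Iv (wend e) ≠ IE e → ∀ j ∈ Iv (wend e), 0 ≤ aE e j) :
    ∃ (ℓ : E → ℝ) (f : V → (Fin N → ℝ)),
      (∀ e, 0 < ℓ e) ∧
      (∀ v : V, ∃ μ : ι → ℝ, (∀ i ∈ Iv v, 0 < μ i) ∧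
        f v = ∑ i ∈ Iv v, μ i • u i) ∧
      (∀ e : E, f (wend e) - f (vend e)
        = ℓ e • ∑ i ∈ IE e, (aE e i : ℝ) • u i) ∧
      (∀ l : L, ∀ t : ℝ, 0 < t →
        ∃ ν : ι → ℝ, (∀ i ∈ IL l, 0 < ν i) ∧
          f (vleg l) + t • ∑ i ∈ IL l, (aL l i : ℝ) • u i
            = ∑ i ∈ IL l, ν i • u i) := by
  exact stmt6_general vend wend vleg hne hedgeinj htree.isAcyclic u Iv IE IL _ _
    (fun e ↦ ⟨hIE₁ e, hIE₂ e, hjumpE₁ e, hjumpE₂ e, mod_cast hposE e, mod_cast hnegE e,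
      mod_cast hslope₁ e, mod_cast hslope₂ e⟩)
    hIL (fun _ _ _ ↦ Nat.cast_nonneg _) (mod_cast hposL)
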